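/- arXiv:math/9806034 — 4 statements merged into one kernel-verified Lean document; each statement's English description precedes it below -/
import Mathlib

section
/- Let l > 0 and let g : ℝ → ℝ be continuously differentiable, 2l-periodic, and have zero mean over I = (-l, l) (i.e. ∫_{-l}^{l} g(x) dx = 0). Then ‖g‖_∞² ≤ 2 ‖g‖ ‖g'‖, i.e. for every x ∈ ℝ, g(x)² ≤ 2 (∫_{-l}^{l} g(ξ)² dξ)^{1/2} (∫_{-l}^{l} g'(ξ)² dξ)^{1/2} (the Agmon inequality for periodic mean-zero functions). -/
/-!
Integrating `(f²)' = 2 f f'` between two points bounds the increment of `f²` by `2 ∫ |f f'|`, which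
Cauchy–Schwarz splits into the two `L²` norms. Measuring the increment from a zero of `f`, moved by
periodicity into the same period as `x`, bounds `f x ^ 2` itself; a vanishing mean provides such a
zero.
-/

open Set MeasureTheory intervalIntegral

theorem integral_norm_mul_norm_le_sqrt_mul_sqrt {α E : Type*} [MeasurableSpace α]
    {μ : Measure α} [NormedAddCommGroup E] {f g : α → E} (hf : MemLp f 2 μ) (hg : MemLp g 2 μ) :
    ∫ x, ‖f x‖ * ‖g x‖ ∂μ ≤ √(∫ x, ‖f x‖ ^ 2 ∂μ) * √(∫ x, ‖g x‖ ^ 2 ∂μ) := by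
  have two_eq : ENNReal.ofReal 2 = 2 := ENNReal.ofReal_ofNat 2
  simpa only [Real.rpow_two, ← Real.sqrt_eq_rpow] using
    integral_mul_norm_le_Lp_mul_Lq Real.HolderConjugate.two_two
      (two_eq.symm ▸ hf) (two_eq.symm ▸ hg)

theorem intervalIntegral_abs_mul_le_sqrt_mul_sqrt {μ : Measure ℝ} {f g : ℝ → ℝ} {a b : ℝ}
    (hab : a ≤ b) (hf : MemLp f 2 (μ.restrict (Ioc a b))) (hg : MemLp g 2 (μ.restrict (Ioc a b))) :
    ∫ t in a..b, |f t * g t| ∂μ ≤ √(∫ t in a..b, f t ^ 2 ∂μ) * √(∫ t in a..b, g t ^ 2 ∂μ) := by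
  simpa only [integral_of_le hab, abs_mul, Real.norm_eq_abs, sq_abs] using
    integral_norm_mul_norm_le_sqrt_mul_sqrt hf hg

theorem exists_mem_uIoo_eq_zero_of_integral_eq_zero {f : ℝ → ℝ} {a b : ℝ} (hab : a ≠ b)
    (hf : ContinuousOn f (uIcc a b)) (hint : ∫ x in a..b, f x = 0) :
    ∃ c ∈ uIoo a b, f c = 0 := by
  simpa only [interval_average_eq, hint, smul_zero] using exists_eq_interval_average hab hf

section AbsolutelyContinuous

variable {f : ℝ → ℝ} {a b x y : ℝ}

theorem sq_sub_sq_eq_two_mul_integral_mul_deriv (hf : AbsolutelyContinuousOnInterval f a b) :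
    f b ^ 2 - f a ^ 2 = 2 * ∫ t in a..b, f t * deriv f t := by
  have hprod := hf.integral_deriv_mul_eq_sub hf
  rw [sq, sq, ← hprod, ← intervalIntegral.integral_const_mul]
  congr 1 with t
  ring

theorem sq_sub_sq_le_two_mul_integral_abs_mul_deriv (hf : AbsolutelyContinuousOnInterval f a b)
    (hx : x ∈ Icc a b) (hy : y ∈ Icc a b) :
    f y ^ 2 - f x ^ 2 ≤ 2 * ∫ t in a..b, |f t * deriv f t| := by
  have hab : a ≤ b := hx.1.trans hx.2
  have hsub : uIcc x y ⊆ uIcc a b := uIcc_subset_uIcc (Icc_subset_uIcc hx) (Icc_subset_uIcc hy)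
  have hint : IntervalIntegrable (fun t ↦ |f t * deriv f t|) volume a b :=
    (hf.intervalIntegrable_deriv.continuousOn_mul hf.continuousOn).abs
  rw [sq_sub_sq_eq_two_mul_integral_mul_deriv (hf.mono hsub)]
  gcongr
  calc ∫ t in x..y, f t * deriv f t
      ≤ |(∫ t in x..y, |f t * deriv f t|)| :=
        (le_abs_self _).trans (norm_integral_le_abs_integral_norm (f := fun t ↦ f t * deriv f t))
    _ ≤ |(∫ t in a..b, |f t * deriv f t|)| :=
        abs_integral_mono_interval (uIoc_subset_uIoc_of_uIcc_subset_uIcc hsub)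
          (ae_of_all _ fun _ ↦ abs_nonneg _) hint
    _ = ∫ t in a..b, |f t * deriv f t| :=
        abs_of_nonneg (integral_nonneg hab fun _ _ ↦ abs_nonneg _)

theorem sq_sub_sq_le_two_mul_sqrt_integral_sq_mul_sqrt_integral_sq_deriv
    (hf : AbsolutelyContinuousOnInterval f a b)
    (hf' : IntervalIntegrable (fun t ↦ deriv f t ^ 2) volume a b)
    (hx : x ∈ Icc a b) (hy : y ∈ Icc a b) :
    f y ^ 2 - f x ^ 2 ≤
      2 * √(∫ t in a..b, f t ^ 2) * √(∫ t in a..b, deriv f t ^ 2) := by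
  have hfLp : MemLp f 2 (volume.restrict (Ioc a b)) :=
    (memLp_two_iff_integrable_sq hf.continuousOn.intervalIntegrable.1.aestronglyMeasurable).2
      (hf.continuousOn.pow 2).intervalIntegrable.1
  have hf'Lp : MemLp (deriv f) 2 (volume.restrict (Ioc a b)) :=
    (memLp_two_iff_integrable_sq (stronglyMeasurable_deriv f).aestronglyMeasurable).2 hf'.1
  calc f y ^ 2 - f x ^ 2
      ≤ 2 * ∫ t in a..b, |f t * deriv f t| :=
        sq_sub_sq_le_two_mul_integral_abs_mul_deriv hf hx hy
    _ ≤ 2 * (√(∫ t in a..b, f t ^ 2) * √(∫ t in a..b, deriv f t ^ 2)) := by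
        gcongr
        exact intervalIntegral_abs_mul_le_sqrt_mul_sqrt (hx.1.trans hx.2) hfLp hf'Lp
    _ = 2 * √(∫ t in a..b, f t ^ 2) * √(∫ t in a..b, deriv f t ^ 2) := (mul_assoc ..).symm

theorem agmon_inequality_periodic_mean_zero_general (hab : a < b)
    (hf : AbsolutelyContinuousOnInterval f a b)
    (hf' : IntervalIntegrable (fun t ↦ deriv f t ^ 2) volume a b)
    (hper : Function.Periodic f (b - a)) (hzero : ∃ x₀, f x₀ = 0) (x : ℝ) :
    f x ^ 2 ≤ 2 * √(∫ t in a..b, f t ^ 2) * √(∫ t in a..b, deriv f t ^ 2) := by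
  have exists_mem_Icc (z : ℝ) : ∃ w ∈ Icc a b, f z = f w := by
    obtain ⟨w, hw, hzw⟩ := hper.exists_mem_Ico (sub_pos.2 hab) z a
    rw [add_sub_cancel] at hw
    exact ⟨w, Ico_subset_Icc_self hw, hzw⟩
  obtain ⟨x₀, hx₀⟩ := hzero
  obtain ⟨w₀, hw₀, hx₀w₀⟩ := exists_mem_Icc x₀
  obtain ⟨w, hw, hxw⟩ := exists_mem_Icc x
  simpa [← hx₀w₀, hx₀, ← hxw] using
    sq_sub_sq_le_two_mul_sqrt_integral_sq_mul_sqrt_integral_sq_deriv hf hf' hw₀ hw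

end AbsolutelyContinuous

/-- **Agmon inequality** for periodic mean-zero functions:
if `g : ℝ → ℝ` is `C¹`, `2l`-periodic and has zero mean over `I = (-l, l)`, then
`‖g‖_∞² ≤ 2 ‖g‖ ‖g'‖`, i.e. for every `x`,
`g(x)² ≤ 2 (∫_I g²)^{1/2} (∫_I g'²)^{1/2}`. -/
theorem agmon_inequality_periodic_mean_zero
    (l : ℝ) (hl : 0 < l) (g : ℝ → ℝ) (hg : ContDiff ℝ 1 g)
    (hper : ∀ x : ℝ, g (x + 2 * l) = g x)
    (hmean : ∫ x in (-l)..l, g x = 0) :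
    ∀ x : ℝ, (g x) ^ 2 ≤
      2 * Real.sqrt (∫ x in (-l)..l, (g x) ^ 2) *
        Real.sqrt (∫ x in (-l)..l, (deriv g x) ^ 2) := by
  have hlt : -l < l := neg_lt_self hl
  have hperiod : Function.Periodic g (l - -l) := by rwa [sub_neg_eq_add, ← two_mul]
  obtain ⟨x₀, -, hx₀⟩ :=
    exists_mem_uIoo_eq_zero_of_integral_eq_zero hlt.ne hg.continuous.continuousOn hmean
  exact agmon_inequality_periodic_mean_zero_general hlt
    hg.contDiffOn.absolutelyContinuousOnInterval
    ((hg.continuous_deriv_one.pow 2).intervalIntegrable _ _) hperiod ⟨x₀, hx₀⟩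
end

section
/- Let l > 0 and let g : ℝ → ℝ be continuously differentiable, 2l-periodic, and have zero mean over I = (-l, l). Then ∫_{-l}^{l} g(x)² dx ≤ (2l)² ∫_{-l}^{l} g'(x)² dx (the Poincaré inequality for periodic mean-zero functions). -/
/-!
The mean value of `g` lies within `∫ ‖g'‖` of every value of `g`, since any two values differ by
at most that much and closed balls are convex. Hence `g` minus its mean is bounded by the `L¹` norm
of `g'`. On an interval of length `L`, Hölder's inequality bounds that `L¹` norm by `L ^ (1 - 1/p)`
times the `Lᵖ` norm of `g'`, and integrating the constant bound costs a factor `L ^ (1/p)`, so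
`‖g - mean g‖ₚ ≤ L ‖g'‖ₚ`.
-/

open MeasureTheory Set
open scoped ENNReal NNReal

section Measure

variable {α E F : Type*} [MeasurableSpace α] {μ : Measure α}
  [NormedAddCommGroup E] [NormedAddCommGroup F]

theorem enorm_sub_average_le [NormedSpace ℝ E] [CompleteSpace E] [IsFiniteMeasure μ] [NeZero μ]
    {f : α → E} (hf : Integrable f μ) {c : E} {C : ℝ≥0∞} (hC : ∀ᵐ y ∂μ, ‖c - f y‖ₑ ≤ C) :
    ‖c - ⨍ y, f y ∂μ‖ₑ ≤ C := by
  have average_mem : ⨍ y, f y ∂μ ∈ Metric.closedEBall c C :=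
    (convex_closedEBall c C).average_mem Metric.isClosed_closedEBall
      (hC.mono fun y hy ↦ by rwa [Metric.mem_closedEBall', edist_eq_enorm_sub]) hf
  rwa [Metric.mem_closedEBall', edist_eq_enorm_sub] at average_mem

theorem eLpNorm_le_measure_univ_mul_eLpNorm_of_enorm_le_eLpNorm_one {f : α → E} {h : α → F}
    {p : ℝ≥0∞} (hp : 1 ≤ p) (hh : AEStronglyMeasurable h μ)
    (hfh : ∀ᵐ x ∂μ, ‖f x‖ₑ ≤ eLpNorm h 1 μ) :
    eLpNorm f p μ ≤ μ univ * eLpNorm h p μ := by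
  have inv_le_one : p.toReal⁻¹ ≤ 1 := by
    simpa only [ENNReal.toReal_inv, ENNReal.toReal_one] using
      ENNReal.toReal_mono ENNReal.one_ne_top (ENNReal.inv_le_one.2 hp)
  calc
    eLpNorm f p μ ≤ eLpNorm h 1 μ * μ univ ^ p.toReal⁻¹ := eLpNorm_le_of_ae_enorm_bound hfh
    _ ≤ eLpNorm h p μ * μ univ ^ (1 - p.toReal⁻¹) * μ univ ^ p.toReal⁻¹ := by
      gcongr
      simpa using eLpNorm_le_eLpNorm_mul_rpow_measure_univ hp hh
    _ = μ univ * eLpNorm h p μ := by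
      rw [mul_assoc, ← ENNReal.rpow_add_of_nonneg _ _ (sub_nonneg.2 inv_le_one) (by positivity),
        sub_add_cancel, ENNReal.rpow_one, mul_comm]

theorem lpNorm_rpow_eq_integral_norm_rpow {f : α → E} {p : ℝ≥0} (hp : p ≠ 0)
    (hf : AEStronglyMeasurable f μ) :
    lpNorm f p μ ^ (p : ℝ) = ∫ x, ‖f x‖ ^ (p : ℝ) ∂μ := by
  rw [lpNorm_nnreal_eq_integral_norm_rpow hp hf,
    Real.rpow_inv_rpow (integral_nonneg fun x ↦ by positivity) (NNReal.coe_ne_zero.2 hp)]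

theorem integral_norm_rpow_le_of_eLpNorm_le {f : α → E} {h : α → F} {p : ℝ≥0} (hp : p ≠ 0)
    (hf : AEStronglyMeasurable f μ) (hh : MemLp h p μ) {c : ℝ} (hc : 0 ≤ c)
    (hfh : eLpNorm f p μ ≤ ENNReal.ofReal c * eLpNorm h p μ) :
    ∫ x, ‖f x‖ ^ (p : ℝ) ∂μ ≤ c ^ (p : ℝ) * ∫ x, ‖h x‖ ^ (p : ℝ) ∂μ := by
  have lpNorm_le : lpNorm f p μ ≤ c * lpNorm h p μ := by
    have := ENNReal.toReal_mono (ENNReal.mul_ne_top ENNReal.ofReal_ne_top hh.eLpNorm_ne_top) hfh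
    rwa [ENNReal.toReal_mul, ENNReal.toReal_ofReal hc, toReal_eLpNorm hf,
      toReal_eLpNorm hh.aestronglyMeasurable] at this
  rw [← lpNorm_rpow_eq_integral_norm_rpow hp hf,
    ← lpNorm_rpow_eq_integral_norm_rpow hp hh.aestronglyMeasurable,
    ← Real.mul_rpow hc lpNorm_nonneg]
  exact Real.rpow_le_rpow lpNorm_nonneg lpNorm_le p.coe_nonneg

theorem memLp_restrict_of_continuousOn_isCompact [TopologicalSpace α] [OpensMeasurableSpace α]
    [IsFiniteMeasureOnCompacts μ] {f : α → E} {K : Set α} {p : ℝ≥0∞} (hf : ContinuousOn f K)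
    (hK : IsCompact K) (hK' : MeasurableSet K) : MemLp f p (μ.restrict K) := by
  obtain ⟨C, hC⟩ := hK.exists_bound_of_continuousOn hf
  have : IsFiniteMeasure (μ.restrict K) := isFiniteMeasure_restrict.2 hK.measure_ne_top
  exact .of_bound (hf.aestronglyMeasurable_of_isCompact hK hK') C (ae_restrict_of_forall_mem hK' hC)

end Measure

section Interval

variable {E : Type*} [NormedAddCommGroup E] [NormedSpace ℝ E] [CompleteSpace E]
  {g : ℝ → E} {a b : ℝ}

theorem enorm_sub_le_lintegral_enorm_deriv (hab : a ≤ b) (hg : ContinuousOn g (Icc a b))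
    (hg' : DifferentiableOn ℝ g (Ioo a b)) :
    ‖g b - g a‖ₑ ≤ ∫⁻ t in Ioc a b, ‖deriv g t‖ₑ := by
  by_cases hint : IntegrableOn (deriv g) (Ioc a b)
  · have norm_sub_le : ‖g b - g a‖ ≤ ∫ t in a..b, ‖deriv g t‖ :=
      norm_sub_le_integral_of_norm_deriv_le_of_le hab hg hg' (.of_forall fun _ _ ↦ le_rfl)
        ((intervalIntegrable_iff_integrableOn_Ioc_of_le hab).2 hint.norm)
    rw [intervalIntegral.integral_of_le hab] at norm_sub_le
    rw [← ofReal_integral_norm_eq_lintegral_enorm hint, ← ofReal_norm]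
    exact ENNReal.ofReal_le_ofReal norm_sub_le
  · have lintegral_eq_top : ∫⁻ t in Ioc a b, ‖deriv g t‖ₑ = ∞ := by
      by_contra hfin
      exact hint ⟨aestronglyMeasurable_deriv g _, lt_top_iff_ne_top.2 hfin⟩
    exact lintegral_eq_top ▸ le_top

theorem enorm_sub_le_lintegral_enorm_deriv_of_mem_Icc (hg : ContinuousOn g (Icc a b))
    (hg' : DifferentiableOn ℝ g (Ioo a b)) {x y : ℝ} (hx : x ∈ Icc a b) (hy : y ∈ Icc a b) :
    ‖g x - g y‖ₑ ≤ ∫⁻ t in Ioc a b, ‖deriv g t‖ₑ := by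
  wlog hyx : y ≤ x generalizing x y
  · rw [enorm_sub_rev]
    exact this hy hx (le_of_not_ge hyx)
  calc
    ‖g x - g y‖ₑ ≤ ∫⁻ t in Ioc y x, ‖deriv g t‖ₑ :=
      enorm_sub_le_lintegral_enorm_deriv hyx (hg.mono (Icc_subset_Icc hy.1 hx.2))
        (hg'.mono (Ioo_subset_Ioo hy.1 hx.2))
    _ ≤ ∫⁻ t in Ioc a b, ‖deriv g t‖ₑ := lintegral_mono_set (Ioc_subset_Ioc hy.1 hx.2)

theorem enorm_sub_setAverage_le_lintegral_enorm_deriv (hab : a < b)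
    (hg : ContinuousOn g (Icc a b)) (hg' : DifferentiableOn ℝ g (Ioo a b)) {x : ℝ}
    (hx : x ∈ Icc a b) :
    ‖g x - ⨍ y in Ioc a b, g y‖ₑ ≤ ∫⁻ t in Ioc a b, ‖deriv g t‖ₑ := by
  have : NeZero (volume.restrict (Ioc a b)) := ⟨by simp [Measure.restrict_eq_zero, hab]⟩
  refine enorm_sub_average_le (hg.integrableOn_Icc.mono_set Ioc_subset_Icc_self) ?_
  filter_upwards [ae_restrict_mem measurableSet_Ioc] with y hy
  exact enorm_sub_le_lintegral_enorm_deriv_of_mem_Icc hg hg' hx (Ioc_subset_Icc_self hy)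

theorem eLpNorm_sub_setAverage_le_mul_eLpNorm_deriv (hab : a < b)
    (hg : ContinuousOn g (Icc a b)) (hg' : DifferentiableOn ℝ g (Ioo a b)) {p : ℝ≥0∞}
    (hp : 1 ≤ p) :
    eLpNorm (fun x ↦ g x - ⨍ y in Ioc a b, g y) p (volume.restrict (Ioc a b)) ≤
      ENNReal.ofReal (b - a) * eLpNorm (deriv g) p (volume.restrict (Ioc a b)) := by
  rw [← Real.volume_Ioc, ← Measure.restrict_apply_univ]
  refine eLpNorm_le_measure_univ_mul_eLpNorm_of_enorm_le_eLpNorm_one hp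
    (aestronglyMeasurable_deriv g _) ?_
  filter_upwards [ae_restrict_mem measurableSet_Ioc] with x hx
  rw [eLpNorm_one_eq_lintegral_enorm]
  exact enorm_sub_setAverage_le_lintegral_enorm_deriv hab hg hg' (Ioc_subset_Icc_self hx)

theorem poincare_inequality_periodic_mean_zero_general (hab : a < b)
    (hg : ContinuousOn g (Icc a b)) (hg' : DifferentiableOn ℝ g (Ioo a b)) {p : ℝ≥0}
    (hp : 1 ≤ p) (hLp : MemLp (deriv g) p (volume.restrict (Ioc a b))) :
    ∫ x in a..b, ‖g x - ⨍ y in a..b, g y‖ ^ (p : ℝ) ≤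
      (b - a) ^ (p : ℝ) * ∫ x in a..b, ‖deriv g x‖ ^ (p : ℝ) := by
  have hmeas : AEStronglyMeasurable g (volume.restrict (Ioc a b)) :=
    (hg.mono Ioc_subset_Icc_self).aestronglyMeasurable measurableSet_Ioc
  simp only [intervalIntegral.integral_of_le hab.le, uIoc_of_le hab.le]
  exact integral_norm_rpow_le_of_eLpNorm_le (one_pos.trans_le hp).ne'
    (hmeas.sub aestronglyMeasurable_const) hLp (sub_nonneg.2 hab.le)
    (eLpNorm_sub_setAverage_le_mul_eLpNorm_deriv hab hg hg' (by exact_mod_cast hp))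

end Interval

/-- **Poincaré inequality** for periodic mean-zero functions:
if `g : ℝ → ℝ` is `C¹`, `2l`-periodic and has zero mean over `I = (-l, l)`, then
`∫_I g² ≤ (2l)² ∫_I g'²`. -/
theorem poincare_inequality_periodic_mean_zero
    (l : ℝ) (hl : 0 < l) (g : ℝ → ℝ) (hg : ContDiff ℝ 1 g)
    (hper : ∀ x : ℝ, g (x + 2 * l) = g x)
    (hmean : ∫ x in (-l)..l, g x = 0) :
    (∫ x in (-l)..l, (g x) ^ 2) ≤ (2 * l) ^ 2 * ∫ x in (-l)..l, (deriv g x) ^ 2 := by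
  have hLp : MemLp (deriv g) (2 : ℝ≥0) (volume.restrict (Ioc (-l) l)) :=
    (memLp_restrict_of_continuousOn_isCompact (hg.continuous_deriv le_rfl).continuousOn
      isCompact_Icc measurableSet_Icc).mono_measure
        (Measure.restrict_mono Ioc_subset_Icc_self le_rfl)
  simpa [interval_average_eq, hmean, two_mul] using
    poincare_inequality_periodic_mean_zero_general (neg_lt_self hl) hg.continuous.continuousOn
      (hg.differentiable one_ne_zero).differentiableOn one_le_two hLp
end

section
/- Let l > 0 and let u, v : ℝ → ℝ be twice continuously differentiable and 2l-periodic, and set w := u - v. Then ∫_{-l}^{l} (u w' + w v') w dx ≤ ( (1/2) ‖u'‖^{1/2} ‖u''‖^{1/2} + ‖v'‖^{1/2} ‖v''‖^{1/2} ) ‖w‖². -/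
/-!
For any periodic `w`, the function `u w²` is periodic, so its derivative integrates to zero and
`∫ (u w' + w v') w = ∫ (-u'/2 + v') w²`, and it remains to bound `u'` and `v'` uniformly.
By Rolle's theorem the derivative `g` of a `T`-periodic function vanishes at some `c`, hence also at
`c + T`. For `y` between these zeros, `g(y)²` is both `∫_c^y 2gg'` and `-∫_y^{c+T} 2gg'`; averaging
the two gives `g(y)² ≤ ∫ |g g'|` over one period, which is at most `‖g‖ ‖g'‖` by Cauchy–Schwarz.
-/

open MeasureTheory Set Function

/-- The `L²` norm of `g` on the interval `(a, b)`, for `a ≤ b`, as a number attached to a function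
rather than to its almost-everywhere class. -/
noncomputable def intervalL2Norm (a b : ℝ) (g : ℝ → ℝ) : ℝ :=
  √(∫ x in a..b, g x ^ 2)

theorem intervalL2Norm_nonneg (a b : ℝ) (g : ℝ → ℝ) : 0 ≤ intervalL2Norm a b g :=
  Real.sqrt_nonneg _

theorem integral_abs_mul_le_sqrt_mul_sqrt {α : Type*} [MeasurableSpace α] {μ : Measure α}
    {f g : α → ℝ} (hf : MemLp f 2 μ) (hg : MemLp g 2 μ) :
    ∫ x, |f x * g x| ∂μ ≤ √(∫ x, f x ^ 2 ∂μ) * √(∫ x, g x ^ 2 ∂μ) := by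
  have holder := integral_mul_norm_le_Lp_mul_Lq Real.HolderConjugate.two_two
    (by simpa using hf) (by simpa using hg)
  simpa [abs_mul, Real.sqrt_eq_rpow] using holder

theorem periodic_deriv {𝕜 E : Type*} [NontriviallyNormedField 𝕜] [NormedAddCommGroup E]
    [NormedSpace 𝕜 E] {f : 𝕜 → E} {T : 𝕜} (hf : Periodic f T) : Periodic (deriv f) T := fun x ↦ by
  rw [← deriv_comp_add_const, hf.funext]

theorem integral_abs_mul_le_intervalL2Norm_mul {a b : ℝ} (hab : a ≤ b) {f g : ℝ → ℝ}
    (hf : Continuous f) (hg : Continuous g) :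
    ∫ x in a..b, |f x * g x| ≤ intervalL2Norm a b f * intervalL2Norm a b g := by
  have memLp_two {h : ℝ → ℝ} (hh : Continuous h) : MemLp h 2 (volume.restrict (Ioc a b)) :=
    (memLp_two_iff_integrable_sq hh.aestronglyMeasurable).2 (hh.pow 2).integrableOn_Ioc
  simpa only [intervalL2Norm, intervalIntegral.integral_of_le hab] using
    integral_abs_mul_le_sqrt_mul_sqrt (memLp_two hf) (memLp_two hg)

theorem abs_sq_sub_sq_le_integral_abs_mul_deriv {g : ℝ → ℝ} (hg : ContDiff ℝ 1 g) {a b : ℝ}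
    (hab : a ≤ b) : |g b ^ 2 - g a ^ 2| ≤ 2 * ∫ x in a..b, |g x * deriv g x| := by
  have hg' : Continuous (deriv g) := hg.continuous_deriv le_rfl
  have ftc : ∫ x in a..b, 2 * (g x * deriv g x) = g b ^ 2 - g a ^ 2 := by
    refine intervalIntegral.integral_eq_sub_of_hasDerivAt (f := fun x ↦ g x ^ 2) (fun x _ ↦ ?_)
      ((hg.continuous.mul hg').const_mul 2 |>.intervalIntegrable a b)
    simpa [mul_assoc] using (hg.differentiable one_ne_zero x).hasDerivAt.fun_pow 2
  rw [← ftc, intervalIntegral.integral_const_mul, abs_mul, abs_two]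
  gcongr
  exact intervalIntegral.abs_integral_le_integral_abs hab

theorem sq_le_integral_abs_mul_deriv_of_eq_zero {g : ℝ → ℝ} (hg : ContDiff ℝ 1 g) {a b y : ℝ}
    (hy : y ∈ Icc a b) (ha : g a = 0) (hb : g b = 0) :
    g y ^ 2 ≤ ∫ x in a..b, |g x * deriv g x| := by
  have integrable (c d : ℝ) : IntervalIntegrable (fun x ↦ |g x * deriv g x|) volume c d :=
    (hg.continuous.mul (hg.continuous_deriv le_rfl)).abs.intervalIntegrable c d
  have left : g y ^ 2 ≤ 2 * ∫ x in a..y, |g x * deriv g x| := by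
    simpa [ha] using abs_sq_sub_sq_le_integral_abs_mul_deriv hg hy.1
  have right : g y ^ 2 ≤ 2 * ∫ x in y..b, |g x * deriv g x| := by
    simpa [hb] using abs_sq_sub_sq_le_integral_abs_mul_deriv hg hy.2
  rw [← intervalIntegral.integral_add_adjacent_intervals (integrable a y) (integrable y b)]
  linarith

theorem sq_le_intervalL2Norm_mul_of_periodic {T : ℝ} (hT : 0 < T) {g : ℝ → ℝ}
    (hg : ContDiff ℝ 1 g) (hper : Periodic g T) {c : ℝ} (hc : g c = 0) (a x : ℝ) :
    g x ^ 2 ≤ intervalL2Norm a (a + T) g * intervalL2Norm a (a + T) (deriv g) := by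
  obtain ⟨y, hy, hxy⟩ := hper.exists_mem_Ico hT x c
  have hper_abs : Periodic (fun z ↦ |g z * deriv g z|) T :=
    (hper.mul (periodic_deriv hper)).comp abs
  calc g x ^ 2 = g y ^ 2 := by rw [hxy]
    _ ≤ ∫ z in c..c + T, |g z * deriv g z| :=
      sq_le_integral_abs_mul_deriv_of_eq_zero hg (Ico_subset_Icc_self hy) hc ((hper c).trans hc)
    _ = ∫ z in a..a + T, |g z * deriv g z| := hper_abs.intervalIntegral_add_eq c a
    _ ≤ _ := integral_abs_mul_le_intervalL2Norm_mul (by linarith) hg.continuous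
      (hg.continuous_deriv le_rfl)

theorem abs_deriv_le_sqrt_intervalL2Norm_mul {T : ℝ} (hT : 0 < T) {f : ℝ → ℝ}
    (hf : ContDiff ℝ 2 f) (hper : Periodic f T) (a x : ℝ) :
    |deriv f x| ≤ √(intervalL2Norm a (a + T) (deriv f)) *
      √(intervalL2Norm a (a + T) (deriv (deriv f))) := by
  obtain ⟨c, -, hc⟩ := exists_deriv_eq_zero (lt_add_of_pos_right a hT)
    hf.continuous.continuousOn (hper a).symm
  have hf' : ContDiff ℝ 1 (deriv f) := hf.deriv' (n := 1)
  rw [← Real.sqrt_mul (intervalL2Norm_nonneg a (a + T) (deriv f))]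
  exact Real.abs_le_sqrt (sq_le_intervalL2Norm_mul_of_periodic hT hf' (periodic_deriv hper) hc a x)

theorem integral_mul_deriv_add_mul_mul_self {u w h : ℝ → ℝ} (hu : ContDiff ℝ 1 u)
    (hw : ContDiff ℝ 1 w) (hh : Continuous h) {a b : ℝ} (hab : u b * w b ^ 2 = u a * w a ^ 2) :
    ∫ x in a..b, (u x * deriv w x + w x * h x) * w x =
      ∫ x in a..b, (-(1 / 2) * deriv u x + h x) * w x ^ 2 := by
  have hu' : Continuous (deriv u) := hu.continuous_deriv le_rfl
  have hw' : Continuous (deriv w) := hw.continuous_deriv le_rfl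
  have hasDerivAt_sq (x : ℝ) : HasDerivAt (fun y ↦ w y ^ 2) (2 * w x * deriv w x) x := by
    simpa using (hw.differentiable one_ne_zero x).hasDerivAt.fun_pow 2
  have integral_deriv : ∫ x in a..b, (deriv u x * w x ^ 2 + u x * (2 * w x * deriv w x)) = 0 := by
    rw [intervalIntegral.integral_deriv_mul_eq_sub
      (fun x _ ↦ (hu.differentiable one_ne_zero x).hasDerivAt) (fun x _ ↦ hasDerivAt_sq x)
      (hu'.intervalIntegrable a b) (((hw.continuous.const_mul 2).mul hw').intervalIntegrable a b),
      hab, sub_self]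
  rw [← sub_eq_zero, ← intervalIntegral.integral_sub, ← mul_zero (1 / 2 : ℝ), ← integral_deriv,
    ← intervalIntegral.integral_const_mul]
  · exact intervalIntegral.integral_congr fun x _ ↦ by ring
  all_goals exact Continuous.intervalIntegrable (by fun_prop) a b

theorem abs_integral_mul_sq_le {a b C : ℝ} (hab : a ≤ b) {φ w : ℝ → ℝ} (hw : Continuous w)
    (hφ : ∀ x, |φ x| ≤ C) : |∫ x in a..b, φ x * w x ^ 2| ≤ C * ∫ x in a..b, w x ^ 2 := by
  rw [← intervalIntegral.integral_const_mul, ← Real.norm_eq_abs]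
  refine intervalIntegral.norm_integral_le_of_norm_le hab (ae_of_all _ fun x _ ↦ ?_)
    (((hw.pow 2).const_mul C).intervalIntegrable a b)
  rw [Real.norm_eq_abs, abs_mul, abs_sq]
  exact mul_le_mul_of_nonneg_right (hφ x) (sq_nonneg _)

theorem nonlinear_term_estimate_general {T : ℝ} (hT : 0 < T) (a : ℝ) {u v w : ℝ → ℝ}
    (hu : ContDiff ℝ 2 u) (hv : ContDiff ℝ 2 v) (hw : ContDiff ℝ 1 w)
    (hup : Periodic u T) (hvp : Periodic v T) (hwp : Periodic w T) :
    |∫ x in a..a + T, (u x * deriv w x + w x * deriv v x) * w x| ≤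
      ((1 / 2) * √(intervalL2Norm a (a + T) (deriv u)) *
          √(intervalL2Norm a (a + T) (deriv (deriv u))) +
        √(intervalL2Norm a (a + T) (deriv v)) * √(intervalL2Norm a (a + T) (deriv (deriv v)))) *
      ∫ x in a..a + T, w x ^ 2 := by
  rw [integral_mul_deriv_add_mul_mul_self (hu.of_le one_le_two) hw
    (hv.continuous_deriv one_le_two) (by rw [hup, hwp])]
  refine abs_integral_mul_sq_le (by linarith) hw.continuous fun x ↦ ?_
  calc |-(1 / 2) * deriv u x + deriv v x|
      ≤ 1 / 2 * |deriv u x| + |deriv v x| := by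
        simpa [abs_mul] using abs_add_le (-(1 / 2) * deriv u x) (deriv v x)
    _ ≤ _ := by
        rw [mul_assoc]
        gcongr
        · exact abs_deriv_le_sqrt_intervalL2Norm_mul hT hu hup a x
        · exact abs_deriv_le_sqrt_intervalL2Norm_mul hT hv hvp a x

/-- For `C²`, `2l`-periodic functions `u, v` and `w := u - v`,
`∫_I (u w' + w v') w dx ≤ ((1/2) ‖u'‖^{1/2} ‖u''‖^{1/2} + ‖v'‖^{1/2} ‖v''‖^{1/2}) ‖w‖²`,
where `‖·‖` is the `L²` norm on `I = (-l, l)`. -/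
theorem nonlinear_term_estimate
    (l : ℝ) (hl : 0 < l) (u v : ℝ → ℝ)
    (hu : ContDiff ℝ 2 u) (hv : ContDiff ℝ 2 v)
    (hup : ∀ x : ℝ, u (x + 2 * l) = u x)
    (hvp : ∀ x : ℝ, v (x + 2 * l) = v x) :
    (∫ x in (-l)..l,
        (u x * deriv (fun y => u y - v y) x + (u x - v x) * deriv v x) * (u x - v x))
      ≤ ((1 / 2) * Real.sqrt (Real.sqrt (∫ x in (-l)..l, (deriv u x) ^ 2)) *
            Real.sqrt (Real.sqrt (∫ x in (-l)..l, (deriv (deriv u) x) ^ 2))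
          + Real.sqrt (Real.sqrt (∫ x in (-l)..l, (deriv v x) ^ 2)) *
            Real.sqrt (Real.sqrt (∫ x in (-l)..l, (deriv (deriv v) x) ^ 2)))
        * ∫ x in (-l)..l, (u x - v x) ^ 2 := by
  have key := nonlinear_term_estimate_general (by linarith : 0 < 2 * l) (-l) hu hv
    ((hu.sub hv).of_le one_le_two) hup hvp (Periodic.sub hup hvp)
  rw [show -l + 2 * l = l by ring] at key
  exact (le_abs_self _).trans key
end

section
/- Let l > 0, 0 ≤ α ≤ 1, and ρ₁, ρ₂ ≥ 0. Let u, v : ℝ × [0, ∞) → ℝ be smooth functions, 2l-periodic in x, such that u solves the nonlocal Kuramoto–Sivashinsky equation u_t + u_{xxxx} + u_{xx} + u u_x + α H(u_{xxx}) = 0 and v solves the Kuramoto–Sivashinsky equation v_t + v_{xxxx} + v_{xx} + v v_x = 0, where H is the periodic Hilbert transform acting in x, and u(·, 0) = v(·, 0). Suppose that for all t ≥ 0, ‖u_x(·,t)‖ ≤ ρ₁, ‖v_x(·,t)‖ ≤ ρ₁, ‖u_{xx}(·,t)‖ ≤ ρ₂, ‖v_{xx}(·,t)‖ ≤ ρ₂,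 and ‖w_x(·,t)‖ ≤ ρ₁ where w := u - v. Then with b₁ := 2 + 4 ρ₁^{1/2} ρ₂^{1/2} and b₂ := 2 ρ₁², for all t ≥ 0: ‖w(·,t)‖² ≤ (b₂ / b₁)(e^{b₁ t} - 1) α². In particular, for each fixed t ≥ 0, ‖u(·,t) - v(·,t)‖ → 0 as α → 0: the solution trajectory of the nonlocal Kuramoto–Sivashinsky equation converges in L² to the trajectory of the usual Kuramoto–Sivashinsky equation starting from the same initial data. -/
/-- `Hf` is the periodic Hilbert transform of the `2l`-periodic function `f`: the `k`-th
Fourier coefficient of `Hf` on `(-l, l)` (w.r.t. the basis `e^{i k π x / l}`) equals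
`i·sgn(k)` times that of `f`, where `sgn(0) = 0`. -/
def IsPeriodicHilbertPair (l : ℝ) (hl : 0 < l) (f Hf : ℝ → ℝ) : Prop :=
  ∀ k : ℤ, fourierCoeffOn (show (-l : ℝ) < l by linarith) (fun x => (Hf x : ℂ)) k
    = Complex.I * (Int.sign k : ℂ) *
        fourierCoeffOn (show (-l : ℝ) < l by linarith) (fun x => (f x : ℂ)) k

/-!
Put `w = u - v` and test the equation for `w` with `2 w`. The fourth-order term dissipates
`2 ‖w_xx‖²`. Half of it absorbs the second-order term, as `-2 ∫ w w_xx ≤ ‖w‖² + ‖w_xx‖²`. The other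
half absorbs the nonlocal term: `H` does not increase the modulus of any Fourier coefficient, so
moving two derivatives from `u_xxx` to `w` on the Fourier side gives
`2 |∫ w α H(u_xxx)| ≤ ‖w_xx‖² + α² ‖u_x‖²` by Parseval's identity. Finally `w (u u_x - v v_x)`
differs from `(u_x + v_x) w² / 4` by the exact derivative of `(u + v) w² / 4`, and `u_x`, `v_x` are
bounded by Agmon's inequality. Grönwall's inequality applied to `‖w‖²` concludes.
-/

open MeasureTheory Set Filter Function ComplexConjugate
open scoped Real Interval

section Interval

variable {a b : ℝ}

theorem memLp_restrict_Ioc_of_continuous {E : Type*} [NormedAddCommGroup E] {f : ℝ → E}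
    (hf : Continuous f) (p : ENNReal) :
    MemLp f p (volume.restrict (Ioc a b)) := by
  obtain ⟨C, hC⟩ := (isCompact_Icc (a := a) (b := b)).exists_bound_of_continuousOn hf.continuousOn
  refine MemLp.of_bound hf.aestronglyMeasurable C ?_
  filter_upwards [ae_restrict_mem measurableSet_Ioc] with x hx
  exact hC x (Ioc_subset_Icc_self hx)

theorem integral_abs_mul_abs_le_sqrt_mul_sqrt {f g : ℝ → ℝ} (hab : a ≤ b) (hf : Continuous f)
    (hg : Continuous g) :
    ∫ x in a..b, |f x| * |g x| ≤ √(∫ x in a..b, f x ^ 2) * √(∫ x in a..b, g x ^ 2) := by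
  simpa [intervalIntegral.integral_of_le hab, Real.sqrt_eq_rpow] using
    integral_mul_norm_le_Lp_mul_Lq Real.HolderConjugate.two_two
      (memLp_restrict_Ioc_of_continuous hf _) (memLp_restrict_Ioc_of_continuous hg _)

theorem neg_two_mul_integral_mul_le {f g : ℝ → ℝ} (hab : a ≤ b) (hf : Continuous f)
    (hg : Continuous g) :
    -2 * ∫ x in a..b, f x * g x ≤ (∫ x in a..b, f x ^ 2) + ∫ x in a..b, g x ^ 2 := by
  rw [← intervalIntegral.integral_const_mul, ← intervalIntegral.integral_add
    (Continuous.intervalIntegrable (by fun_prop) _ _)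
    (Continuous.intervalIntegrable (by fun_prop) _ _)]
  refine intervalIntegral.integral_mono_on hab (Continuous.intervalIntegrable (by fun_prop) _ _)
    (Continuous.intervalIntegrable (by fun_prop) _ _) fun x _ => ?_
  linarith [sq_nonneg (f x + g x)]

theorem sq_le_two_mul_sqrt_mul_sqrt_of_eq_zero {f : ℝ → ℝ} (hf : ContDiff ℝ 1 f) {c x : ℝ}
    (hc : c ∈ Icc a b) (hx : x ∈ Icc a b) (hfc : f c = 0) :
    f x ^ 2 ≤ 2 * (√(∫ y in a..b, f y ^ 2) * √(∫ y in a..b, deriv f y ^ 2)) := by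
  have hf' : Continuous (deriv f) := hf.continuous_deriv_one
  have hf₀ := hf.continuous
  have hab : a ≤ b := hc.1.trans hc.2
  have hderiv (y : ℝ) : HasDerivAt (fun z => f z ^ 2) (2 * (f y * deriv f y)) y :=
    ((hf.differentiable_one y).hasDerivAt.pow 2).congr_deriv (by push_cast; ring)
  have hsub : Ι c x ⊆ Ioc a b := by
    rw [uIoc_eq_union]
    exact union_subset (Ioc_subset_Ioc hc.1 hx.2) (Ioc_subset_Ioc hx.1 hc.2)
  calc f x ^ 2 = ∫ y in c..x, 2 * (f y * deriv f y) := by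
        rw [intervalIntegral.integral_eq_sub_of_hasDerivAt (fun y _ => hderiv y)
          (Continuous.intervalIntegrable (by fun_prop) _ _)]
        simp [hfc]
    _ ≤ ∫ y in Ι c x, ‖2 * (f y * deriv f y)‖ :=
        (Real.le_norm_self _).trans intervalIntegral.norm_integral_le_integral_norm_uIoc
    _ ≤ ∫ y in Ioc a b, ‖2 * (f y * deriv f y)‖ :=
        setIntegral_mono_set (Continuous.integrableOn_Ioc (by fun_prop))
          (Eventually.of_forall fun y => norm_nonneg _) hsub.eventuallyLE
    _ = 2 * ∫ y in a..b, |f y| * |deriv f y| := by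
        rw [← intervalIntegral.integral_const_mul, intervalIntegral.integral_of_le hab]
        simp
    _ ≤ _ := by gcongr; exact integral_abs_mul_abs_le_sqrt_mul_sqrt hab hf₀ hf'

theorem deriv_sq_le_two_mul_sqrt_mul_sqrt {f : ℝ → ℝ} (hab : a < b) (hf : ContDiff ℝ 2 f)
    (hfab : f a = f b) {x : ℝ} (hx : x ∈ Icc a b) :
    deriv f x ^ 2 ≤
      2 * (√(∫ y in a..b, deriv f y ^ 2) * √(∫ y in a..b, iteratedDeriv 2 f y ^ 2)) := by
  obtain ⟨c, hc, hfc⟩ := exists_deriv_eq_zero hab hf.continuous.continuousOn hfab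
  simpa only [iteratedDeriv_succ, iteratedDeriv_zero] using sq_le_two_mul_sqrt_mul_sqrt_of_eq_zero
    (hf.deriv' : ContDiff ℝ 1 (deriv f)) (Ioo_subset_Icc_self hc) hx hfc

theorem abs_deriv_le_two_mul_sqrt_mul_sqrt {f : ℝ → ℝ} (hab : a < b) (hf : ContDiff ℝ 2 f)
    (hfab : f a = f b) {ρ₁ ρ₂ : ℝ} (h₁ : √(∫ y in a..b, deriv f y ^ 2) ≤ ρ₁)
    (h₂ : √(∫ y in a..b, iteratedDeriv 2 f y ^ 2) ≤ ρ₂) {x : ℝ} (hx : x ∈ Icc a b) :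
    |deriv f x| ≤ 2 * √ρ₁ * √ρ₂ := by
  have hρ₁ : 0 ≤ ρ₁ := (Real.sqrt_nonneg _).trans h₁
  have hρ₂ : 0 ≤ ρ₂ := (Real.sqrt_nonneg _).trans h₂
  refine abs_le_of_sq_le_sq ?_ (by positivity)
  calc deriv f x ^ 2 ≤ 2 * (ρ₁ * ρ₂) :=
        (deriv_sq_le_two_mul_sqrt_mul_sqrt hab hf hfab hx).trans (by gcongr)
    _ ≤ 4 * (ρ₁ * ρ₂) := by gcongr; norm_num
    _ = (2 * √ρ₁ * √ρ₂) ^ 2 := by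
        rw [mul_pow, mul_pow, Real.sq_sqrt hρ₁, Real.sq_sqrt hρ₂]; ring

end Interval

section Periodic

variable {a b : ℝ}

theorem hasDerivAt_iteratedDeriv {𝕜 F : Type*} [NontriviallyNormedField 𝕜] [NormedAddCommGroup F]
    [NormedSpace 𝕜 F] {f : 𝕜 → F} {n : ℕ} (hf : ContDiff 𝕜 (n + 1) f) (x : 𝕜) :
    HasDerivAt (iteratedDeriv n f) (iteratedDeriv (n + 1) f x) x := by
  rw [iteratedDeriv_succ]
  exact (hf.differentiable_iteratedDeriv' n x).hasDerivAt

theorem periodic_iteratedDeriv {𝕜 F : Type*} [NontriviallyNormedField 𝕜] [NormedAddCommGroup F]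
    [NormedSpace 𝕜 F] {f : 𝕜 → F} {T : 𝕜} (hf : Periodic f T) (n : ℕ) :
    Periodic (iteratedDeriv n f) T := fun x => by
  rw [← congrFun (iteratedDeriv_comp_add_const n f T) x, hf.funext]

theorem eq_endpoints_of_periodic_sub {β : Type*} {f : ℝ → β} (hf : Periodic f (b - a)) :
    f a = f b := by
  rw [← hf a, add_sub_cancel]

theorem integral_iteratedDeriv_mul_iteratedDeriv_succ {f g : ℝ → ℝ} {m n : ℕ}
    (hf : ContDiff ℝ (m + 1) f) (hg : ContDiff ℝ (n + 1) g) (hfp : Periodic f (b - a))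
    (hgp : Periodic g (b - a)) :
    ∫ x in a..b, iteratedDeriv m f x * iteratedDeriv (n + 1) g x =
      -∫ x in a..b, iteratedDeriv (m + 1) f x * iteratedDeriv n g x := by
  rw [intervalIntegral.integral_mul_deriv_eq_deriv_mul
    (fun x _ => hasDerivAt_iteratedDeriv hf x) (fun x _ => hasDerivAt_iteratedDeriv hg x)
    ((hf.continuous_iteratedDeriv' (m + 1)).intervalIntegrable _ _)
    ((hg.continuous_iteratedDeriv' (n + 1)).intervalIntegrable _ _),
    eq_endpoints_of_periodic_sub (periodic_iteratedDeriv hfp m),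
    eq_endpoints_of_periodic_sub (periodic_iteratedDeriv hgp n), sub_self, zero_sub]

theorem integral_mul_iteratedDeriv_four {f : ℝ → ℝ} (hf : ContDiff ℝ 4 f)
    (hfp : Periodic f (b - a)) :
    ∫ x in a..b, f x * iteratedDeriv 4 f x = ∫ x in a..b, iteratedDeriv 2 f x ^ 2 := by
  calc ∫ x in a..b, f x * iteratedDeriv 4 f x
      = -∫ x in a..b, iteratedDeriv 1 f x * iteratedDeriv 3 f x := by
        simpa using integral_iteratedDeriv_mul_iteratedDeriv_succ (m := 0) (n := 3)
          (hf.of_le (by norm_num)) (hf.of_le (by norm_num)) hfp hfp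
    _ = ∫ x in a..b, iteratedDeriv 2 f x ^ 2 := by
        rw [integral_iteratedDeriv_mul_iteratedDeriv_succ (m := 1) (n := 2)
          (hf.of_le (by norm_num)) (hf.of_le (by norm_num)) hfp hfp, neg_neg]
        simp_rw [sq]

theorem integral_sub_mul_mul_deriv_sub {u v : ℝ → ℝ} (hu : ContDiff ℝ 1 u) (hv : ContDiff ℝ 1 v)
    (hup : Periodic u (b - a)) (hvp : Periodic v (b - a)) :
    ∫ x in a..b, (u x - v x) * (u x * deriv u x - v x * deriv v x) =
      1 / 4 * ∫ x in a..b, (deriv u x + deriv v x) * (u x - v x) ^ 2 := by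
  have hu₀ := hu.continuous
  have hv₀ := hv.continuous
  have hderiv (x : ℝ) : HasDerivAt (fun y => 1 / 4 * ((u y + v y) * (u y - v y) ^ 2))
      ((u x - v x) * (u x * deriv u x - v x * deriv v x)
        - 1 / 4 * ((deriv u x + deriv v x) * (u x - v x) ^ 2)) x := by
    have hux := (hu.differentiable_one x).hasDerivAt
    have hvx := (hv.differentiable_one x).hasDerivAt
    refine (((hux.add hvx).mul ((hux.sub hvx).pow 2)).const_mul (1 / 4)).congr_deriv ?_
    simp only [Pi.add_apply, Pi.sub_apply, Pi.pow_apply]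
    push_cast
    ring
  rw [← sub_eq_zero, ← intervalIntegral.integral_const_mul, ← intervalIntegral.integral_sub
    (Continuous.intervalIntegrable (by fun_prop) _ _)
    (Continuous.intervalIntegrable (by fun_prop) _ _),
    intervalIntegral.integral_eq_sub_of_hasDerivAt (fun x _ => hderiv x)
    (Continuous.intervalIntegrable (by fun_prop) _ _),
    eq_endpoints_of_periodic_sub hup, eq_endpoints_of_periodic_sub hvp, sub_self]

theorem neg_two_mul_integral_sub_mul_mul_deriv_sub_le {u v : ℝ → ℝ} {M : ℝ} (hab : a ≤ b)
    (hu : ContDiff ℝ 1 u) (hv : ContDiff ℝ 1 v) (hup : Periodic u (b - a))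
    (hvp : Periodic v (b - a)) (huM : ∀ x ∈ Icc a b, |deriv u x| ≤ M)
    (hvM : ∀ x ∈ Icc a b, |deriv v x| ≤ M) :
    -2 * ∫ x in a..b, (u x - v x) * (u x * deriv u x - v x * deriv v x) ≤
      M * ∫ x in a..b, (u x - v x) ^ 2 := by
  have hu₀ := hu.continuous
  have hv₀ := hv.continuous
  have hbound : ∫ x in a..b, -(deriv u x + deriv v x) * (u x - v x) ^ 2 ≤
      ∫ x in a..b, 2 * M * (u x - v x) ^ 2 := by
    refine intervalIntegral.integral_mono_on hab (Continuous.intervalIntegrable (by fun_prop) _ _)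
      (Continuous.intervalIntegrable (by fun_prop) _ _) fun x hx => ?_
    gcongr
    linarith [neg_le_of_abs_le (huM x hx), neg_le_of_abs_le (hvM x hx)]
  simp only [neg_mul, intervalIntegral.integral_neg, intervalIntegral.integral_const_mul] at hbound
  rw [integral_sub_mul_mul_deriv_sub hu hv hup hvp]
  linarith

end Periodic

section Fourier

variable {a b : ℝ}

theorem hasSum_conj_fourierCoeff_mul {T : ℝ} [hT : Fact (0 < T)]
    (f g : Lp ℂ 2 (AddCircle.haarAddCircle (T := T))) :
    HasSum (fun k => conj (fourierCoeff f k) * fourierCoeff g k)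
      (∫ t : AddCircle T, conj (f t) * g t ∂AddCircle.haarAddCircle) := by
  have hinner := fourierBasis.hasSum_inner_mul_inner f g
  rw [L2.inner_def] at hinner
  simp only [RCLike.inner_apply'] at hinner
  refine hinner.congr_fun fun k => ?_
  rw [← fourierBasis_repr, ← fourierBasis_repr, fourierBasis.repr_apply_apply,
    fourierBasis.repr_apply_apply, inner_conj_symm]

theorem hasSum_conj_fourierCoeffOn_mul {f g : ℝ → ℂ} (hab : a < b)
    (hf : MemLp f 2 (volume.restrict (Ioc a b))) (hg : MemLp g 2 (volume.restrict (Ioc a b))) :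
    HasSum (fun k => conj (fourierCoeffOn hab f k) * fourierCoeffOn hab g k)
      ((b - a)⁻¹ • ∫ x in a..b, conj (f x) * g x) := by
  have := Fact.mk (sub_pos.2 hab)
  rw [← add_sub_cancel a b] at hf hg
  have hF := hf.memLp_liftIoc.haarAddCircle
  have hG := hg.memLp_liftIoc.haarAddCircle
  convert hasSum_conj_fourierCoeff_mul hF.toLp hG.toLp using 1
  · simp only [fourierCoeff_congr_ae hF.coeFn_toLp, fourierCoeff_congr_ae hG.coeFn_toLp,
      fourierCoeffOn]
  · nth_rw 2 [← add_sub_cancel a b]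
    rw [← AddCircle.integral_liftIoc_eq_intervalIntegral, ← AddCircle.integral_haarAddCircle]
    refine integral_congr_ae ?_
    filter_upwards [hF.coeFn_toLp, hG.coeFn_toLp] with x hxF hxG
    rw [hxF, hxG]
    rfl

theorem two_mul_abs_integral_mul_le_of_norm_fourierCoeffOn_mul_le {f g p q : ℝ → ℝ} (hab : a < b)
    (hf : Continuous f) (hg : Continuous g) (hp : Continuous p) (hq : Continuous q)
    (h : ∀ k, ‖fourierCoeffOn hab (fun x => (f x : ℂ)) k‖ *
        ‖fourierCoeffOn hab (fun x => (g x : ℂ)) k‖ ≤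
      ‖fourierCoeffOn hab (fun x => (p x : ℂ)) k‖ * ‖fourierCoeffOn hab (fun x => (q x : ℂ)) k‖) :
    2 * |∫ x in a..b, f x * g x| ≤ (∫ x in a..b, p x ^ 2) + ∫ x in a..b, q x ^ 2 := by
  have hL2 {r : ℝ → ℝ} (hr : Continuous r) :
      MemLp (fun x => (r x : ℂ)) 2 (volume.restrict (Ioc a b)) :=
    memLp_restrict_Ioc_of_continuous (by fun_prop) 2
  have hparseval := (hasSum_sq_fourierCoeffOn hab (hL2 hp)).add
    (hasSum_sq_fourierCoeffOn hab (hL2 hq))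
  have hpairing := (hasSum_conj_fourierCoeffOn_mul hab (hL2 hf) (hL2 hg)).mul_left 2
  have hle := hpairing.norm_le_of_bounded hparseval fun k => by
    rw [norm_mul, norm_mul, RCLike.norm_conj, Complex.norm_ofNat]
    linarith [h k, two_mul_le_add_sq ‖fourierCoeffOn hab (fun x => (p x : ℂ)) k‖
      ‖fourierCoeffOn hab (fun x => (q x : ℂ)) k‖]
  have hba : 0 < (b - a)⁻¹ := inv_pos.2 (sub_pos.2 hab)
  simp only [Complex.conj_ofReal, ← Complex.ofReal_mul, intervalIntegral.integral_ofReal,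
    Complex.real_smul, norm_mul, Complex.norm_real, Complex.norm_ofNat, Real.norm_eq_abs,
    sq_abs, abs_of_pos hba, smul_eq_mul] at hle
  refine le_of_mul_le_mul_left ?_ hba
  linarith

theorem fourierCoeffOn_of_hasDerivAt_of_eq_endpoints {f f' : ℝ → ℂ} (hab : a < b)
    (hf : ∀ x ∈ uIcc a b, HasDerivAt f (f' x) x) (hf' : IntervalIntegrable f' volume a b)
    (hfab : f a = f b) (k : ℤ) :
    fourierCoeffOn hab f' k = 2 * π * Complex.I * k / (b - a) * fourierCoeffOn hab f k := by
  rcases eq_or_ne k 0 with rfl | hk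
  · simp [fourierCoeffOn_eq_integral, intervalIntegral.integral_eq_sub_of_hasDerivAt hf hf', hfab]
  · have hba : (b - a : ℂ) ≠ 0 := by exact_mod_cast (sub_pos.2 hab).ne'
    have hk' : (k : ℂ) ≠ 0 := by exact_mod_cast hk
    rw [fourierCoeffOn_of_hasDerivAt hab hk hf hf', hfab]
    field_simp
    ring

theorem fourierCoeffOn_iteratedDeriv {f : ℝ → ℝ} {n : ℕ} (hab : a < b) (hf : ContDiff ℝ n f)
    (hfp : Periodic f (b - a)) (k : ℤ) :
    fourierCoeffOn hab (fun x => ((iteratedDeriv n f x : ℝ) : ℂ)) k =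
      (2 * π * Complex.I * k / (b - a)) ^ n * fourierCoeffOn hab (fun x => (f x : ℂ)) k := by
  induction n with
  | zero => simp
  | succ n ih =>
    have hderiv (x : ℝ) :
        HasDerivAt (fun y => ((iteratedDeriv n f y : ℝ) : ℂ))
          ((iteratedDeriv (n + 1) f x : ℝ) : ℂ) x :=
      (hasDerivAt_iteratedDeriv hf x).ofReal_comp
    have hcont : Continuous fun x => ((iteratedDeriv (n + 1) f x : ℝ) : ℂ) :=
      Complex.continuous_ofReal.comp (hf.continuous_iteratedDeriv' (n + 1))
    rw [fourierCoeffOn_of_hasDerivAt_of_eq_endpoints hab (fun x _ => hderiv x)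
      (hcont.intervalIntegrable _ _)
      (congrArg _ (eq_endpoints_of_periodic_sub (periodic_iteratedDeriv hfp n))),
      ih (hf.of_le (by norm_num)), pow_succ', ← mul_assoc]

theorem two_mul_abs_integral_mul_le_of_norm_fourierCoeffOn_le_iteratedDeriv_three {f g h : ℝ → ℝ}
    {c : ℝ} (hab : a < b) (hf : ContDiff ℝ 2 f) (hg : ContDiff ℝ 3 g) (hh : Continuous h)
    (hfp : Periodic f (b - a)) (hgp : Periodic g (b - a))
    (hcoeff : ∀ k, ‖fourierCoeffOn hab (fun x => (h x : ℂ)) k‖ ≤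
      |c| * ‖fourierCoeffOn hab (fun x => ((iteratedDeriv 3 g x : ℝ) : ℂ)) k‖) :
    2 * |∫ x in a..b, f x * h x| ≤
      (∫ x in a..b, iteratedDeriv 2 f x ^ 2) + c ^ 2 * ∫ x in a..b, deriv g x ^ 2 := by
  have hg₁ : ContDiff ℝ 1 g := hg.of_le (by norm_num)
  rw [← intervalIntegral.integral_const_mul]
  simp_rw [← mul_pow]
  refine two_mul_abs_integral_mul_le_of_norm_fourierCoeffOn_mul_le hab hf.continuous hh
    (hf.continuous_iteratedDeriv' 2) (by fun_prop) fun k => ?_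
  have hshift : fourierCoeffOn hab (fun x => (f x : ℂ)) k *
        fourierCoeffOn hab (fun x => ((iteratedDeriv 3 g x : ℝ) : ℂ)) k =
      fourierCoeffOn hab (fun x => ((iteratedDeriv 2 f x : ℝ) : ℂ)) k *
        fourierCoeffOn hab (fun x => ((deriv g x : ℝ) : ℂ)) k := by
    rw [← iteratedDeriv_one, fourierCoeffOn_iteratedDeriv hab hg hgp,
      fourierCoeffOn_iteratedDeriv hab hf hfp, fourierCoeffOn_iteratedDeriv hab hg₁ hgp]
    ring
  simp only [Complex.ofReal_mul, fourierCoeffOn.const_mul, norm_mul, Complex.norm_real,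
    Real.norm_eq_abs]
  calc ‖fourierCoeffOn hab (fun x => (f x : ℂ)) k‖ * ‖fourierCoeffOn hab (fun x => (h x : ℂ)) k‖
      ≤ ‖fourierCoeffOn hab (fun x => (f x : ℂ)) k‖ *
        (|c| * ‖fourierCoeffOn hab (fun x => ((iteratedDeriv 3 g x : ℝ) : ℂ)) k‖) := by
        gcongr
        exact hcoeff k
    _ = |c| * ‖fourierCoeffOn hab (fun x => (f x : ℂ)) k *
        fourierCoeffOn hab (fun x => ((iteratedDeriv 3 g x : ℝ) : ℂ)) k‖ := by
        rw [norm_mul]; ring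
    _ = _ := by rw [hshift, norm_mul]; ring

theorem IsPeriodicHilbertPair.norm_fourierCoeffOn_const_mul_le {l : ℝ} {hl : 0 < l}
    {f Hf : ℝ → ℝ} (h : IsPeriodicHilbertPair l hl f Hf) (c : ℝ) (k : ℤ) :
    ‖fourierCoeffOn (neg_lt_self hl) (fun x => ((c * Hf x : ℝ) : ℂ)) k‖ ≤
      |c| * ‖fourierCoeffOn (neg_lt_self hl) (fun x => (f x : ℂ)) k‖ := by
  have hsign : ‖(Int.sign k : ℂ)‖ ≤ 1 := by
    rcases Int.sign_trichotomy k with hk | hk | hk <;> simp [hk]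
  simp only [Complex.ofReal_mul, fourierCoeffOn.const_mul, h k, norm_mul, Complex.norm_real,
    Complex.norm_I, Real.norm_eq_abs, one_mul]
  gcongr
  exact mul_le_of_le_one_left (norm_nonneg _) hsign

end Fourier

section Energy

/-- The forced Kuramoto–Sivashinsky equation `u_t + u_xxxx + u_xx + u u_x + h = 0` at a single
instant. The time derivative enters as the function `ut`, so that energy estimates concern spatial
profiles only; the nonlocal equation has forcing `h = α H(u_xxx)` and the usual one `h = 0`. -/
def IsForcedKuramotoSivashinsky (u ut h : ℝ → ℝ) : Prop :=
  ∀ x, ut x + iteratedDeriv 4 u x + iteratedDeriv 2 u x + u x * deriv u x + h x = 0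

variable {a b : ℝ} {u v ut vt h : ℝ → ℝ}

theorem IsForcedKuramotoSivashinsky.continuous_forcing (hueq : IsForcedKuramotoSivashinsky u ut h)
    (hut : Continuous ut) (hu : ContDiff ℝ 4 u) : Continuous h := by
  have hu₀ := hu.continuous
  have hu₁ : Continuous (deriv u) := (hu.of_le (by norm_num)).continuous_deriv_one
  have hu₂ := (hu.of_le (by norm_num) : ContDiff ℝ 2 u).continuous_iteratedDeriv' 2
  have hh : h = fun x => -(ut x + iteratedDeriv 4 u x + iteratedDeriv 2 u x + u x * deriv u x) :=
    funext fun x => by linarith [hueq x]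
  rw [hh]
  fun_prop

theorem IsForcedKuramotoSivashinsky.integral_two_mul_sub_mul_sub_eq
    (hueq : IsForcedKuramotoSivashinsky u ut h) (hveq : IsForcedKuramotoSivashinsky v vt 0)
    (hu : ContDiff ℝ 4 u) (hv : ContDiff ℝ 4 v) (hh : Continuous h) :
    ∫ x in a..b, 2 * (u x - v x) * (ut x - vt x) =
      -2 * (∫ x in a..b, (u - v) x * iteratedDeriv 4 (u - v) x)
      + -2 * (∫ x in a..b, (u - v) x * iteratedDeriv 2 (u - v) x)
      + -2 * (∫ x in a..b, (u x - v x) * (u x * deriv u x - v x * deriv v x))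
      + -2 * (∫ x in a..b, (u - v) x * h x) := by
  have hu₁ : Continuous (deriv u) := (hu.of_le (by norm_num)).continuous_deriv_one
  have hv₁ : Continuous (deriv v) := (hv.of_le (by norm_num)).continuous_deriv_one
  have hu₂ : ContDiff ℝ 2 u := hu.of_le (by norm_num)
  have hv₂ : ContDiff ℝ 2 v := hv.of_le (by norm_num)
  have hu₀ := hu.continuous
  have hv₀ := hv.continuous
  have hw₂ := (hu₂.sub hv₂).continuous_iteratedDeriv' 2
  have hw₄ := (hu.sub hv).continuous_iteratedDeriv' 4
  simp only [← intervalIntegral.integral_const_mul]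
  rw [← intervalIntegral.integral_add, ← intervalIntegral.integral_add,
    ← intervalIntegral.integral_add]
  · congr 1 with x
    rw [iteratedDeriv_sub hu.contDiffAt hv.contDiffAt,
      iteratedDeriv_sub hu₂.contDiffAt hv₂.contDiffAt, Pi.sub_apply]
    have hveq_x := hveq x
    rw [Pi.zero_apply, add_zero] at hveq_x
    linear_combination 2 * (u x - v x) * (hueq x - hveq_x)
  all_goals exact Continuous.intervalIntegrable (by fun_prop) _ _

theorem IsForcedKuramotoSivashinsky.integral_two_mul_sub_mul_sub_le {c M : ℝ}
    (hab : a < b) (hueq : IsForcedKuramotoSivashinsky u ut h)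
    (hveq : IsForcedKuramotoSivashinsky v vt 0)
    (hu : ContDiff ℝ 4 u) (hv : ContDiff ℝ 4 v) (hh : Continuous h)
    (hup : Periodic u (b - a)) (hvp : Periodic v (b - a))
    (hcoeff : ∀ k, ‖fourierCoeffOn hab (fun x => (h x : ℂ)) k‖ ≤
      |c| * ‖fourierCoeffOn hab (fun x => ((iteratedDeriv 3 u x : ℝ) : ℂ)) k‖)
    (huM : ∀ x ∈ Icc a b, |deriv u x| ≤ M) (hvM : ∀ x ∈ Icc a b, |deriv v x| ≤ M) :
    ∫ x in a..b, 2 * (u x - v x) * (ut x - vt x) ≤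
      (1 + M) * (∫ x in a..b, (u x - v x) ^ 2) + c ^ 2 * ∫ x in a..b, deriv u x ^ 2 := by
  have hw : ContDiff ℝ 4 (u - v) := hu.sub hv
  have hw₂ : ContDiff ℝ 2 (u - v) := hw.of_le (by norm_num)
  have hwp : Periodic (u - v) (b - a) := hup.sub hvp
  have hdiffusion := integral_mul_iteratedDeriv_four hw hwp
  have hantidiffusion := neg_two_mul_integral_mul_le hab.le hw.continuous
    (hw₂.continuous_iteratedDeriv' 2)
  have htransport := neg_two_mul_integral_sub_mul_mul_deriv_sub_le hab.le
    (hu.of_le (by norm_num)) (hv.of_le (by norm_num)) hup hvp huM hvM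
  have hnonlocal := two_mul_abs_integral_mul_le_of_norm_fourierCoeffOn_le_iteratedDeriv_three hab
    hw₂ (hu.of_le (by norm_num)) hh hwp hup hcoeff
  rw [hueq.integral_two_mul_sub_mul_sub_eq hveq hu hv hh]
  simp only [Pi.sub_apply] at hdiffusion hantidiffusion hnonlocal ⊢
  linarith [neg_abs_le (∫ x in a..b, (u x - v x) * h x)]

theorem IsForcedKuramotoSivashinsky.integral_two_mul_sub_mul_sub_le_of_sqrt_integral_le
    {c ρ₁ ρ₂ : ℝ} (hab : a < b) (hueq : IsForcedKuramotoSivashinsky u ut h)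
    (hveq : IsForcedKuramotoSivashinsky v vt 0)
    (hu : ContDiff ℝ 4 u) (hv : ContDiff ℝ 4 v) (hut : Continuous ut)
    (hup : Periodic u (b - a)) (hvp : Periodic v (b - a))
    (hcoeff : ∀ k, ‖fourierCoeffOn hab (fun x => (h x : ℂ)) k‖ ≤
      |c| * ‖fourierCoeffOn hab (fun x => ((iteratedDeriv 3 u x : ℝ) : ℂ)) k‖)
    (hu1 : √(∫ x in a..b, deriv u x ^ 2) ≤ ρ₁) (hv1 : √(∫ x in a..b, deriv v x ^ 2) ≤ ρ₁)
    (hu2 : √(∫ x in a..b, iteratedDeriv 2 u x ^ 2) ≤ ρ₂)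
    (hv2 : √(∫ x in a..b, iteratedDeriv 2 v x ^ 2) ≤ ρ₂) :
    ∫ x in a..b, 2 * (u x - v x) * (ut x - vt x) ≤
      (1 + 2 * √ρ₁ * √ρ₂) * (∫ x in a..b, (u x - v x) ^ 2) + ρ₁ ^ 2 * c ^ 2 := by
  have huM (x : ℝ) (hx : x ∈ Icc a b) := abs_deriv_le_two_mul_sqrt_mul_sqrt hab
    (hu.of_le (by norm_num)) (eq_endpoints_of_periodic_sub hup) hu1 hu2 hx
  have hvM (x : ℝ) (hx : x ∈ Icc a b) := abs_deriv_le_two_mul_sqrt_mul_sqrt hab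
    (hv.of_le (by norm_num)) (eq_endpoints_of_periodic_sub hvp) hv1 hv2 hx
  have hu1_sq : ∫ x in a..b, deriv u x ^ 2 ≤ ρ₁ ^ 2 := (Real.sqrt_le_iff.1 hu1).2
  have henergy := hueq.integral_two_mul_sub_mul_sub_le hab hveq hu hv
    (hueq.continuous_forcing hut hu) hup hvp hcoeff huM hvM
  linarith [mul_le_mul_of_nonneg_right hu1_sq (sq_nonneg c)]

end Energy

section Time

theorem hasDerivAt_uncurry_left {E : Type*} [NormedAddCommGroup E] [NormedSpace ℝ E]
    {F : ℝ → ℝ → E} {t x : ℝ} (hF : DifferentiableAt ℝ (uncurry F) (t, x)) :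
    HasDerivAt (fun s => F s x) (fderiv ℝ (uncurry F) (t, x) (1, 0)) t := by
  have hline : HasDerivAt (fun s : ℝ => (s, x)) ((1 : ℝ), (0 : ℝ)) t :=
    (hasDerivAt_id t).prodMk (hasDerivAt_const t x)
  exact hF.hasFDerivAt.comp_hasDerivAt t hline

theorem continuous_deriv_uncurry_left {E : Type*} [NormedAddCommGroup E] [NormedSpace ℝ E]
    {F : ℝ → ℝ → E} (hF : ContDiff ℝ 1 (uncurry F)) :
    Continuous fun p : ℝ × ℝ => deriv (fun s => F s p.2) p.1 := by
  simp_rw [fun p : ℝ × ℝ => (hasDerivAt_uncurry_left (hF.differentiable_one p)).deriv]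
  exact (hF.continuous_fderiv one_ne_zero).clm_apply continuous_const

theorem hasDerivAt_integral_of_contDiff_uncurry {E : Type*} [NormedAddCommGroup E]
    [NormedSpace ℝ E] {F : ℝ → ℝ → E} (hF : ContDiff ℝ 1 (uncurry F)) (a b t : ℝ) :
    HasDerivAt (fun s => ∫ x in a..b, F s x) (∫ x in a..b, deriv (fun s => F s x) t) t := by
  have hF' := continuous_deriv_uncurry_left hF
  have hFs (s : ℝ) : Continuous (F s) := hF.continuous.comp (Continuous.prodMk_right s)
  have hF's : Continuous fun x => deriv (fun s => F s x) t := hF'.comp (Continuous.prodMk_right t)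
  obtain ⟨C, hC⟩ := ((isCompact_Icc (a := t - 1) (b := t + 1)).prod
    (isCompact_uIcc (a := a) (b := b))).exists_bound_of_continuousOn hF'.continuousOn
  refine (intervalIntegral.hasDerivAt_integral_of_dominated_loc_of_deriv_le (bound := fun _ => C)
    (F' := fun s x => deriv (fun r => F r x) s)
    (Icc_mem_nhds (sub_one_lt t) (lt_add_one t))
    (Eventually.of_forall fun s => (hFs s).aestronglyMeasurable)
    ((hFs t).intervalIntegrable _ _) hF's.aestronglyMeasurable
    (Eventually.of_forall fun x hx s hs => hC (s, x) ⟨hs, uIoc_subset_uIcc hx⟩)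
    (continuous_const.intervalIntegrable _ _)
    (Eventually.of_forall fun x _ s _ => ?_)).2
  exact (hasDerivAt_uncurry_left (hF.differentiable_one (s, x))).differentiableAt.hasDerivAt

theorem le_exp_mul_add_of_hasDerivAt_le {f f' : ℝ → ℝ} {K ε t₀ t : ℝ} (hK : K ≠ 0)
    (ht : t₀ ≤ t) (hf : ∀ s, HasDerivAt f (f' s) s) (hbound : ∀ s, t₀ ≤ s → f' s ≤ K * f s + ε) :
    f t ≤ f t₀ * Real.exp (K * (t - t₀)) + ε / K * (Real.exp (K * (t - t₀)) - 1) := by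
  have h := le_gronwallBound_of_liminf_deriv_right_le (b := t)
    (fun s _ => (hf s).continuousAt.continuousWithinAt)
    (fun s _ r hr => (hf s).hasDerivWithinAt.liminf_right_slope_le hr) le_rfl
    (fun s hs => hbound s hs.1) t ⟨ht, le_rfl⟩
  rwa [gronwallBound_of_K_ne_0 hK] at h

theorem hasDerivAt_integral_sub_sq {u v : ℝ → ℝ → ℝ} (hu : ContDiff ℝ 1 (uncurry u))
    (hv : ContDiff ℝ 1 (uncurry v)) (a b t : ℝ) :
    HasDerivAt (fun s => ∫ x in a..b, (u s x - v s x) ^ 2)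
      (∫ x in a..b, 2 * (u t x - v t x) *
        (deriv (fun s => u s x) t - deriv (fun s => v s x) t)) t := by
  have hsq : ContDiff ℝ 1 (uncurry fun s x => (u s x - v s x) ^ 2) := (hu.sub hv).pow 2
  refine (hasDerivAt_integral_of_contDiff_uncurry hsq a b t).congr_deriv
    (intervalIntegral.integral_congr fun x _ => ?_)
  have hux := (hasDerivAt_uncurry_left (hu.differentiable_one (t, x))).differentiableAt.hasDerivAt
  have hvx := (hasDerivAt_uncurry_left (hv.differentiable_one (t, x))).differentiableAt.hasDerivAt
  simpa using ((hux.fun_sub hvx).fun_pow 2).deriv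

end Time

theorem nonlocal_ks_trajectory_convergence_general
    {l α ρ₁ ρ₂ : ℝ} (hl : 0 < l) {u v Hu3 : ℝ → ℝ → ℝ}
    (hu : ContDiff ℝ 4 (uncurry u)) (hv : ContDiff ℝ 4 (uncurry v))
    (hup : ∀ t, Periodic (u t) (2 * l)) (hvp : ∀ t, Periodic (v t) (2 * l))
    (hHu3 : ∀ t, 0 ≤ t → IsPeriodicHilbertPair l hl (iteratedDeriv 3 (u t)) (Hu3 t))
    (hueq : ∀ t, 0 ≤ t → ∀ x,
      deriv (fun s => u s x) t + iteratedDeriv 4 (u t) x + iteratedDeriv 2 (u t) x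
        + u t x * deriv (u t) x + α * Hu3 t x = 0)
    (hveq : ∀ t, 0 ≤ t → ∀ x,
      deriv (fun s => v s x) t + iteratedDeriv 4 (v t) x + iteratedDeriv 2 (v t) x
        + v t x * deriv (v t) x = 0)
    (hu1 : ∀ t, 0 ≤ t → √(∫ x in (-l)..l, deriv (u t) x ^ 2) ≤ ρ₁)
    (hv1 : ∀ t, 0 ≤ t → √(∫ x in (-l)..l, deriv (v t) x ^ 2) ≤ ρ₁)
    (hu2 : ∀ t, 0 ≤ t → √(∫ x in (-l)..l, iteratedDeriv 2 (u t) x ^ 2) ≤ ρ₂)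
    (hv2 : ∀ t, 0 ≤ t → √(∫ x in (-l)..l, iteratedDeriv 2 (v t) x ^ 2) ≤ ρ₂)
    {t : ℝ} (ht : 0 ≤ t) :
    ∫ x in (-l)..l, (u t x - v t x) ^ 2 ≤
      (∫ x in (-l)..l, (u 0 x - v 0 x) ^ 2) * Real.exp ((2 + 4 * √ρ₁ * √ρ₂) * t)
        + 2 * ρ₁ ^ 2 / (2 + 4 * √ρ₁ * √ρ₂)
          * (Real.exp ((2 + 4 * √ρ₁ * √ρ₂) * t) - 1) * α ^ 2 := by
  have hu_slice (s : ℝ) : ContDiff ℝ 4 (u s) := hu.comp (contDiff_const.prodMk contDiff_id)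
  have hv_slice (s : ℝ) : ContDiff ℝ 4 (v s) := hv.comp (contDiff_const.prodMk contDiff_id)
  have hperiod : l - -l = 2 * l := by ring
  have hu_eq (s : ℝ) (hs : 0 ≤ s) : IsForcedKuramotoSivashinsky (u s)
      (fun x => deriv (fun r => u r x) s) (fun x => α * Hu3 s x) := hueq s hs
  have hv_eq (s : ℝ) (hs : 0 ≤ s) : IsForcedKuramotoSivashinsky (v s)
      (fun x => deriv (fun r => v r x) s) 0 := fun x => by simpa using hveq s hs x
  have hut_cont (s : ℝ) : Continuous fun x => deriv (fun r => u r x) s :=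
    (continuous_deriv_uncurry_left (hu.of_le (by norm_num))).comp (Continuous.prodMk_right s)
  have hbound (s : ℝ) (hs : 0 ≤ s) :
      ∫ x in (-l)..l, 2 * (u s x - v s x) *
          (deriv (fun r => u r x) s - deriv (fun r => v r x) s) ≤
        (2 + 4 * √ρ₁ * √ρ₂) * (∫ x in (-l)..l, (u s x - v s x) ^ 2) + 2 * ρ₁ ^ 2 * α ^ 2 := by
    have henergy := (hu_eq s hs).integral_two_mul_sub_mul_sub_le_of_sqrt_integral_le
      (neg_lt_self hl) (hv_eq s hs) (hu_slice s) (hv_slice s) (hut_cont s)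
      (hperiod ▸ hup s) (hperiod ▸ hvp s) ((hHu3 s hs).norm_fourierCoeffOn_const_mul_le α)
      (hu1 s hs) (hv1 s hs) (hu2 s hs) (hv2 s hs)
    have hw_nonneg : 0 ≤ ∫ x in (-l)..l, (u s x - v s x) ^ 2 :=
      intervalIntegral.integral_nonneg (neg_le_self hl.le) fun x _ => sq_nonneg _
    have hslack : 0 ≤ (1 + 2 * √ρ₁ * √ρ₂) * (∫ x in (-l)..l, (u s x - v s x) ^ 2) +
      ρ₁ ^ 2 * α ^ 2 := by positivity
    linarith
  have hgronwall := le_exp_mul_add_of_hasDerivAt_le (by positivity) ht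
    (hasDerivAt_integral_sub_sq (hu.of_le (by norm_num)) (hv.of_le (by norm_num)) (-l) l) hbound
  rw [sub_zero] at hgronwall
  exact hgronwall.trans_eq (by ring)

/-- **Trajectory convergence** (quantitative form of Theorem 3.1(i)): let `u` solve the
nonlocal Kuramoto–Sivashinsky equation `u_t + u_{xxxx} + u_{xx} + u u_x + α H(u_{xxx}) = 0`
and `v` solve `v_t + v_{xxxx} + v_{xx} + v v_x = 0`, both `2l`-periodic in `x`, with the same
initial data, under the uniform bounds `‖u_x‖, ‖v_x‖, ‖w_x‖ ≤ ρ₁`, `‖u_{xx}‖, ‖v_{xx}‖ ≤ ρ₂`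
where `w := u - v`.  Then with `b₁ := 2 + 4 ρ₁^{1/2} ρ₂^{1/2}` and `b₂ := 2 ρ₁²`, for all
`t ≥ 0`, `‖w(·,t)‖² ≤ (b₂/b₁)(e^{b₁ t} - 1) α²`; in particular, for each fixed `t` this
bound tends to `0` as `α → 0`, so the trajectory of the nonlocal equation converges in `L²`
to that of the usual Kuramoto–Sivashinsky equation. -/
theorem nonlocal_ks_trajectory_convergence
    (l α ρ₁ ρ₂ : ℝ) (hl : 0 < l) (hα0 : 0 ≤ α) (hα1 : α ≤ 1)
    (hρ₁ : 0 ≤ ρ₁) (hρ₂ : 0 ≤ ρ₂)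
    (u v Hu3 : ℝ → ℝ → ℝ)
    (hu : ContDiff ℝ (⊤ : ℕ∞) (Function.uncurry u))
    (hv : ContDiff ℝ (⊤ : ℕ∞) (Function.uncurry v))
    (hup : ∀ t x : ℝ, u t (x + 2 * l) = u t x)
    (hvp : ∀ t x : ℝ, v t (x + 2 * l) = v t x)
    (hHu3p : ∀ t x : ℝ, Hu3 t (x + 2 * l) = Hu3 t x)
    (hHu3 : ∀ t : ℝ, 0 ≤ t → IsPeriodicHilbertPair l hl (iteratedDeriv 3 (u t)) (Hu3 t))
    (hueq : ∀ t : ℝ, 0 ≤ t → ∀ x : ℝ,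
      deriv (fun s => u s x) t + iteratedDeriv 4 (u t) x + iteratedDeriv 2 (u t) x
        + u t x * deriv (u t) x + α * Hu3 t x = 0)
    (hveq : ∀ t : ℝ, 0 ≤ t → ∀ x : ℝ,
      deriv (fun s => v s x) t + iteratedDeriv 4 (v t) x + iteratedDeriv 2 (v t) x
        + v t x * deriv (v t) x = 0)
    (hinit : ∀ x : ℝ, u 0 x = v 0 x)
    (hu1 : ∀ t : ℝ, 0 ≤ t → Real.sqrt (∫ x in (-l)..l, (deriv (u t) x) ^ 2) ≤ ρ₁)
    (hv1 : ∀ t : ℝ, 0 ≤ t → Real.sqrt (∫ x in (-l)..l, (deriv (v t) x) ^ 2) ≤ ρ₁)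
    (hu2 : ∀ t : ℝ, 0 ≤ t → Real.sqrt (∫ x in (-l)..l, (iteratedDeriv 2 (u t) x) ^ 2) ≤ ρ₂)
    (hv2 : ∀ t : ℝ, 0 ≤ t → Real.sqrt (∫ x in (-l)..l, (iteratedDeriv 2 (v t) x) ^ 2) ≤ ρ₂)
    (hw1 : ∀ t : ℝ, 0 ≤ t →
      Real.sqrt (∫ x in (-l)..l, (deriv (fun y => u t y - v t y) x) ^ 2) ≤ ρ₁) :
    (∀ t : ℝ, 0 ≤ t →
      (∫ x in (-l)..l, (u t x - v t x) ^ 2)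
        ≤ ((2 * ρ₁ ^ 2) / (2 + 4 * Real.sqrt ρ₁ * Real.sqrt ρ₂))
            * (Real.exp ((2 + 4 * Real.sqrt ρ₁ * Real.sqrt ρ₂) * t) - 1) * α ^ 2) ∧
    (∀ t : ℝ, Filter.Tendsto
      (fun a : ℝ => ((2 * ρ₁ ^ 2) / (2 + 4 * Real.sqrt ρ₁ * Real.sqrt ρ₂))
          * (Real.exp ((2 + 4 * Real.sqrt ρ₁ * Real.sqrt ρ₂) * t) - 1) * a ^ 2)
      (nhds 0) (nhds 0)) := by
  refine ⟨fun t ht => ?_, fun t => Continuous.tendsto' (by fun_prop) _ _ (by simp)⟩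
  simpa [hinit] using nonlocal_ks_trajectory_convergence_general hl (contDiff_infty.1 hu 4)
    (contDiff_infty.1 hv 4) hup hvp hHu3 hueq hveq hu1 hv1 hu2 hv2 ht
end
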